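/- For every natural number r there exists a natural number β = β(r) such that every finite subgroup of the group GL_r(ℤ) of invertible r×r matrices with integer entries has cardinality at most β. -/

import Mathlib

/-!
Reduction modulo `3` is injective on every finite subgroup of `GL_r(ℤ)`, so the order of the
finite group `GL_r(ℤ/3)` is a bound.

For injectivity, let `A ≡ 1 (mod 3)` with `A ^ n = 1` and `n > 0`.
If `3 ∤ n`, then `(A - 1) * ∑_{i < n} A ^ i = 0`, and the second factor is `≡ n (mod 3)`, so its
determinant is nonzero modulo `3` and `A = 1` (`eq_one_of_pow_eq_one_of_not_dvd`).
If `A ^ 3 = 1`, write `A = 1 + 3 B`; then `1 + A + A ^ 2 = 3 (1 + 3 (B + B ^ 2))`, and the same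
determinant argument gives `A = 1` (`eq_one_of_pow_three_eq_one`).
The general case follows by splitting off the factors `3` of `n` one at a time.
-/

/-- Reduction modulo `3` of integer matrices. -/
noncomputable abbrev redThree (r : ℕ) :
    Matrix (Fin r) (Fin r) ℤ →+* Matrix (Fin r) (Fin r) (ZMod 3) :=
  (Int.castRingHom (ZMod 3)).mapMatrix

/-- An integer matrix that reduces modulo `3` to an invertible scalar is not a right zero
divisor, because its determinant is nonzero. -/
lemma eq_zero_of_mul_eq_zero_of_redThree {r n : ℕ} (hn : ¬ 3 ∣ n)
    {B X : Matrix (Fin r) (Fin r) ℤ} (hX : redThree r X = (n : Matrix (Fin r) (Fin r) (ZMod 3)))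
    (h : B * X = 0) : B = 0 := by
  have : Fact (Nat.Prime 3) := ⟨Nat.prime_three⟩
  have hn' : (n : ZMod 3) ≠ 0 := by
    rwa [Ne, ZMod.natCast_eq_zero_iff]
  have hdet : X.det ≠ 0 := by
    intro h0
    have h1 := RingHom.map_det (Int.castRingHom (ZMod 3)) X
    rw [hX, h0, map_zero, ← Matrix.diagonal_natCast, Matrix.det_diagonal] at h1
    simp only [Finset.prod_const] at h1
    exact pow_ne_zero _ hn' h1.symm
  have h2 : X.det • B = 0 := by
    have h3 : B * X * X.adjugate = 0 := by rw [h, zero_mul]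
    rwa [mul_assoc, Matrix.mul_adjugate, mul_smul_comm, mul_one] at h3
  exact (smul_eq_zero.mp h2).resolve_left hdet

lemma eq_one_of_pow_eq_one_of_not_dvd {r n : ℕ} (hn : ¬ 3 ∣ n)
    {A : Matrix (Fin r) (Fin r) ℤ} (hA : redThree r A = 1) (h : A ^ n = 1) : A = 1 := by
  refine sub_eq_zero.mp (eq_zero_of_mul_eq_zero_of_redThree hn
    (X := ∑ i ∈ Finset.range n, A ^ i) ?_ ?_)
  · rw [map_sum]
    simp only [map_pow, hA, one_pow, Finset.sum_const, Finset.card_range, nsmul_eq_mul, mul_one]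
  · rw [mul_geom_sum, h, sub_self]

lemma eq_one_of_pow_three_eq_one {r : ℕ}
    {A : Matrix (Fin r) (Fin r) ℤ} (hA : redThree r A = 1) (h : A ^ 3 = 1) : A = 1 := by
  have hdvd : ∀ i j, ∃ b : ℤ, (A - 1) i j = 3 * b := by
    intro i j
    have h0 : redThree r (A - 1) = 0 := by rw [map_sub, hA, map_one, sub_self]
    have h1 : (((A - 1) i j : ℤ) : ZMod 3) = 0 := congrFun (congrFun h0 i) j
    exact (ZMod.intCast_zmod_eq_zero_iff_dvd _ 3).mp h1
  choose B hB using hdvd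
  have hAB : A = 1 + (3 : ℤ) • (Matrix.of B) := by
    rw [← sub_eq_iff_eq_add']
    ext i j
    simpa using hB i j
  generalize Matrix.of B = C at hAB
  have h9 : (9 : ℤ) • (C * (1 + (3 : ℤ) • (C + C ^ 2))) = 0 := by
    have h4 : A ^ 3 - 1 = 0 := by rw [h, sub_self]
    rw [← h4, hAB]
    noncomm_ring
  have hC : C = 0 := by
    refine eq_zero_of_mul_eq_zero_of_redThree (n := 1) (by norm_num) ?_
      ((smul_eq_zero.mp h9).resolve_left (by norm_num))
    have h3 : (3 : Matrix (Fin r) (Fin r) (ZMod 3)) = 0 := by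
      rw [← Matrix.diagonal_ofNat, show (OfNat.ofNat 3 : ZMod 3) = 0 from rfl]
      exact Matrix.diagonal_zero
    rw [map_add, map_one, map_zsmul, zsmul_eq_mul]
    simp [h3]
  rw [hAB, hC, smul_zero, add_zero]

/-- The kernel of reduction modulo `3` has no torsion. -/
lemma eq_one_of_pow_eq_one_of_redThree {r : ℕ} (n : ℕ) (hn : 0 < n)
    {A : Matrix (Fin r) (Fin r) ℤ} (hA : redThree r A = 1) (h : A ^ n = 1) : A = 1 := by
  induction n using Nat.strong_induction_on with
  | _ n ih =>
    by_cases h3 : 3 ∣ n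
    · obtain ⟨m, rfl⟩ := h3
      refine ih m (by omega) (by omega) ?_
      refine eq_one_of_pow_three_eq_one ?_ (by rw [← pow_mul, mul_comm, h])
      rw [map_pow, hA, one_pow]
    · exact eq_one_of_pow_eq_one_of_not_dvd h3 hA h

/-- Minkowski's bound: for every natural number `r` there is a natural number `β`
such that every finite subgroup of `GL_r(ℤ)` has cardinality at most `β`. -/
theorem minkowski_bound (r : ℕ) :
    ∃ β : ℕ, ∀ H : Subgroup (Matrix.GeneralLinearGroup (Fin r) ℤ),
      Finite H → Nat.card H ≤ β := by
  refine ⟨Nat.card (Matrix.GeneralLinearGroup (Fin r) (ZMod 3)), fun H hH => ?_⟩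
  let f : H →* Matrix.GeneralLinearGroup (Fin r) (ZMod 3) :=
    (Matrix.GeneralLinearGroup.map (Int.castRingHom (ZMod 3))).comp H.subtype
  refine Nat.card_le_card_of_injective f ((injective_iff_map_eq_one f).mpr fun a ha => ?_)
  apply Subtype.ext
  apply Units.ext
  refine eq_one_of_pow_eq_one_of_redThree (orderOf a) (orderOf_pos a) (congrArg Units.val ha) ?_
  exact congrArg (fun x : H => (x : Matrix.GeneralLinearGroup (Fin r) ℤ).val)
    (pow_orderOf_eq_one a)
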